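/- For each (r−1)-slim partition μ ∈ π_n choose a symmetric polynomial g_μ with highest partition μ, and let {f̃_λ}, with λ ranging over admissible partitions in π_n, be any ℂ-basis of F_n^{(k,2)}; set f_λ = 𝓕(f̃_λ). Then the polynomials {f_λ g_μ}, where μ ranges over all (r−1)-slim partitions in π_n and λ over all admissible partitions in π_n, form a ℂ-basis of F_n^{(k,r)}. -/

import Mathlib

open MvPolynomial

/-- `l` is an `(r-1)`-slim partition of length at most `n`:
consecutive differences are `< r-1` and the last part is `< r-1`. -/
def IsSlim (r n : ℕ) (l : Fin n → ℕ) : Prop :=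
  (∀ i : Fin n, ∀ h : (i : ℕ) + 1 < n, l i - l ⟨(i : ℕ) + 1, h⟩ < r - 1) ∧
  (∀ i : Fin n, (i : ℕ) = n - 1 → l i < r - 1)

/-- The monomial symmetric polynomial `m_λ`: the sum of the distinct monomials obtained
from `x^λ` by permuting the variables. -/
noncomputable def msym (n : ℕ) (l : Fin n → ℕ) : MvPolynomial (Fin n) ℂ :=
  ∑ a ∈ Finset.image (fun w : Equiv.Perm (Fin n) => l ∘ w) Finset.univ,
    MvPolynomial.monomial (Finsupp.equivFunOnFinite.symm a) (1 : ℂ)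

/-- Strict dominance order on partitions of equal weight:
`a < b` iff `a ≠ b`, `|a| = |b|` and all partial sums of `a` are at most those of `b`. -/
def DomLT (n : ℕ) (a b : Fin n → ℕ) : Prop :=
  a ≠ b ∧ (∑ i, a i = ∑ i, b i) ∧
  ∀ i : Fin n, ∑ j ∈ Finset.univ.filter (· ≤ i), a j
    ≤ ∑ j ∈ Finset.univ.filter (· ≤ i), b j

/-- `g` is a symmetric polynomial with highest partition `μ`:
`g = c_μ m_μ + Σ_{ν < μ} c_ν m_ν` with `c_μ ≠ 0` (`<` the dominance order). -/
def HighestPartition (n : ℕ) (g : MvPolynomial (Fin n) ℂ) (μ : Fin n → ℕ) : Prop :=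
  ∃ (S : Finset (Fin n → ℕ)) (coef : (Fin n → ℕ) → ℂ),
    μ ∈ S ∧ coef μ ≠ 0 ∧
    (∀ ν ∈ S, Antitone ν ∧ (ν = μ ∨ DomLT n ν μ)) ∧
    g = ∑ ν ∈ S, coef ν • msym n ν

/-- The Frobenius homomorphism `𝓕 : f(x_1,…,x_n) ↦ f(x_1^{r-1},…,x_n^{r-1})`. -/
noncomputable def Frob (r n : ℕ) (f : MvPolynomial (Fin n) ℂ) : MvPolynomial (Fin n) ℂ :=
  (MvPolynomial.aeval fun i : Fin n =>
    (MvPolynomial.X i : MvPolynomial (Fin n) ℂ) ^ (r - 1)) f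


/-! ### Partitions and their difference vectors -/

/-- extension by zero -/
def extZ (n : ℕ) (d : Fin n → ℕ) (i : ℕ) : ℕ := if h : i < n then d ⟨i, h⟩ else 0

/-- consecutive differences -/
def dlt (n : ℕ) (d : Fin n → ℕ) (i : ℕ) : ℕ := extZ n d i - extZ n d (i + 1)

lemma extZ_anti (n : ℕ) (d : Fin n → ℕ) (hd : Antitone d) (i : ℕ) :
    extZ n d (i + 1) ≤ extZ n d i := by
  unfold extZ
  split_ifs with h1 h2
  · exact hd (by simp [Fin.le_def])
  · omega
  · omega
  · omega

lemma extZ_eq_sum (n : ℕ) (d : Fin n → ℕ) (hd : Antitone d) (i : ℕ) (hi : i ≤ n) :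
    extZ n d i = ∑ j ∈ Finset.Ico i n, dlt n d j := by
  induction hi using Nat.decreasingInduction with
  | self => simp [extZ]
  | of_succ i hi ih =>
    rw [Finset.sum_eq_sum_Ico_succ_bot hi, ← ih, dlt]
    have := extZ_anti n d hd i
    omega

lemma eq_sum_dlt (n : ℕ) (d : Fin n → ℕ) (hd : Antitone d) (i : Fin n) :
    d i = ∑ j ∈ Finset.Ico (i : ℕ) n, dlt n d j := by
  rw [← extZ_eq_sum n d hd i i.2.le]
  simp [extZ]

lemma antitone_sum_Ico (n : ℕ) (e : ℕ → ℕ) :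
    Antitone (fun i : Fin n => ∑ j ∈ Finset.Ico (i : ℕ) n, e j) := by
  intro i j hij
  apply Finset.sum_le_sum_of_subset
  exact Finset.Ico_subset_Ico_left hij

lemma slim_decomp (r n : ℕ) (hr : 2 ≤ r) (d : Fin n → ℕ) (hd : Antitone d) :
    ∃ l u : Fin n → ℕ, Antitone l ∧ Antitone u ∧ IsSlim r n u ∧
      ∀ i, d i = (r - 1) * l i + u i := by
  have hm : 0 < r - 1 := by omega
  refine ⟨fun i => ∑ j ∈ Finset.Ico (i : ℕ) n, dlt n d j / (r - 1),
    fun i => ∑ j ∈ Finset.Ico (i : ℕ) n, dlt n d j % (r - 1),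
    antitone_sum_Ico n _, antitone_sum_Ico n _, ⟨?_, ?_⟩, ?_⟩
  · intro i h
    simp only
    rw [Finset.sum_eq_sum_Ico_succ_bot i.2]
    simp only [Nat.add_sub_cancel_right]
    exact Nat.mod_lt _ hm
  · intro i h
    simp only
    have : Finset.Ico (i : ℕ) n = {(i : ℕ)} := by
      ext x; simp; have := i.2; omega
    rw [this]
    simp only [Finset.sum_singleton]
    exact Nat.mod_lt _ hm
  · intro i
    rw [eq_sum_dlt n d hd i, Finset.mul_sum, ← Finset.sum_add_distrib]
    exact Finset.sum_congr rfl fun j _ => (Nat.div_add_mod _ _).symm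

lemma slim_dlt_lt (r n : ℕ) (u : Fin n → ℕ) (hs : IsSlim r n u) (i : Fin n) :
    dlt n u i < r - 1 := by
  unfold dlt extZ
  by_cases h : (i : ℕ) + 1 < n
  · simp only [i.2, h, dif_pos]
    exact hs.1 i h
  · simp only [i.2, h, dif_pos, dif_neg, not_false_eq_true]
    have := hs.2 i (by omega)
    simpa using this

/-- the (injective) difference map on slim partitions -/
def slimMap (r n : ℕ) (u : {l : Fin n → ℕ // Antitone l ∧ IsSlim r n l}) :
    Fin n → Fin (r - 1) :=
  fun i => ⟨dlt n u.1 i, slim_dlt_lt r n u.1 u.2.2 i⟩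

lemma slimMap_inj (r n : ℕ) : Function.Injective (slimMap r n) := by
  intro u v h
  apply Subtype.ext
  funext i
  rw [eq_sum_dlt n u.1 u.2.1 i, eq_sum_dlt n v.1 v.2.1 i]
  refine Finset.sum_congr rfl fun j hj => ?_
  have := congrFun h ⟨j, (Finset.mem_Ico.mp hj).2⟩
  simpa [slimMap] using this

/-! ### Monomial symmetric polynomials and the lexicographic order -/

lemma msym_isSymmetric (n : ℕ) (l : Fin n → ℕ) : (msym n l).IsSymmetric := by
  intro e
  unfold msym
  rw [map_sum]
  refine Finset.sum_nbij' (fun a => a ∘ e.symm) (fun a => a ∘ e) ?_ ?_ ?_ ?_ ?_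
  · intro a ha
    simp only [Finset.mem_image, Finset.mem_univ, true_and] at ha ⊢
    obtain ⟨w, rfl⟩ := ha
    exact ⟨e.symm.trans w, by ext; simp⟩
  · intro a ha
    simp only [Finset.mem_image, Finset.mem_univ, true_and] at ha ⊢
    obtain ⟨w, rfl⟩ := ha
    exact ⟨e.trans w, by ext; simp⟩
  · intro a _; ext; simp
  · intro a _; ext; simp
  · intro a _
    rw [rename_monomial]
    have : Finsupp.mapDomain e (Finsupp.equivFunOnFinite.symm a) =
        Finsupp.equivFunOnFinite.symm (a ∘ e.symm) := by
      rw [← Finsupp.equivMapDomain_eq_mapDomain]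
      ext i
      simp [Finsupp.equivMapDomain_apply]
    rw [this]

lemma coeff_msym (n : ℕ) (l : Fin n → ℕ) (d : Fin n →₀ ℕ) :
    (msym n l).coeff d = if (∃ w : Equiv.Perm (Fin n), l ∘ w = d) then 1 else 0 := by
  unfold msym
  rw [coeff_sum]
  simp only [coeff_monomial]
  have : ∀ a : Fin n → ℕ, (Finsupp.equivFunOnFinite.symm a = d) ↔ a = (d : Fin n → ℕ) := by
    intro a
    constructor
    · rintro rfl; simp
    · rintro rfl; ext; simp
  simp only [this]
  rw [Finset.sum_ite_eq']
  simp

lemma degree_antitone (n : ℕ) (f : MvPolynomial (Fin n) ℂ) (hf : f.IsSymmetric) (h0 : f ≠ 0) :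
    Antitone (MonomialOrder.lex.degree f : Fin n → ℕ) := by
  intro i j hij
  by_contra hlt
  push Not at hlt
  have hne : i ≠ j := by rintro rfl; exact lt_irrefl _ hlt
  have hij' : i < j := lt_of_le_of_ne hij hne
  set d := MonomialOrder.lex.degree f with hd
  have hmem : f.coeff d ≠ 0 := by
    rw [hd]; exact MonomialOrder.coeff_degree_ne_zero_iff.mpr h0
  have hmem' : f.coeff (Finsupp.mapDomain (Equiv.swap i j) d) ≠ 0 := by
    rw [← hf (Equiv.swap i j), coeff_rename_mapDomain _ (Equiv.swap i j).injective]
    exact hmem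
  have hle := MonomialOrder.lex.le_degree (mem_support_iff.mpr hmem')
  rw [← hd, MonomialOrder.lex_le_iff, ← not_lt] at hle
  apply hle
  rw [Finsupp.Lex.lt_iff]
  rw [← Finsupp.equivMapDomain_eq_mapDomain]
  refine ⟨i, ?_, ?_⟩
  · intro x hx
    have h1 : x ≠ i := ne_of_lt hx
    have h2 : x ≠ j := ne_of_lt (hx.trans hij')
    simp [Finsupp.equivMapDomain_apply, Equiv.swap_apply_of_ne_of_ne h1 h2]
  · simpa [Finsupp.equivMapDomain_apply] using hlt

lemma coeff_msym_self (n : ℕ) (l : Fin n → ℕ) :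
    (msym n l).coeff (Finsupp.equivFunOnFinite.symm l) = 1 := by
  rw [coeff_msym, if_pos]
  exact ⟨1, by ext; simp⟩

lemma degree_msym (n : ℕ) (l : Fin n → ℕ) (hl : Antitone l) :
    MonomialOrder.lex.degree (msym n l) = Finsupp.equivFunOnFinite.symm l := by
  have h0 : msym n l ≠ 0 := by
    intro h
    have := coeff_msym_self n l
    rw [h] at this
    simp at this
  have ha := degree_antitone n _ (msym_isSymmetric n l) h0
  have hc : (msym n l).coeff (MonomialOrder.lex.degree (msym n l)) ≠ 0 :=
    MonomialOrder.coeff_degree_ne_zero_iff.mpr h0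
  rw [coeff_msym] at hc
  obtain ⟨w, hw⟩ : ∃ w : Equiv.Perm (Fin n), l ∘ w = MonomialOrder.lex.degree (msym n l) := by
    by_contra hh
    rw [if_neg hh] at hc
    exact hc rfl
  rw [← hw] at ha
  have h2 : Antitone (l ∘ (1 : Equiv.Perm (Fin n))) := by simpa using hl
  have := Tuple.unique_antitone ha h2
  rw [hw] at this
  apply Finsupp.ext
  intro i
  rw [this]
  simp

lemma domLT_lex (n : ℕ) (a b : Fin n → ℕ) (h : DomLT n a b) :
    MonomialOrder.lex.toSyn (Finsupp.equivFunOnFinite.symm a) <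
      MonomialOrder.lex.toSyn (Finsupp.equivFunOnFinite.symm b) := by
  rw [MonomialOrder.lex_lt_iff]
  rcases lt_trichotomy (toLex (Finsupp.equivFunOnFinite.symm a))
    (toLex (Finsupp.equivFunOnFinite.symm b)) with h1 | h1 | h1
  · exact h1
  · exfalso
    apply h.1
    have : Finsupp.equivFunOnFinite.symm a = Finsupp.equivFunOnFinite.symm b := by
      simpa using h1
    exact Finsupp.equivFunOnFinite.symm.injective this
  · exfalso
    rw [Finsupp.Lex.lt_iff] at h1
    obtain ⟨i, h2, h3⟩ := h1
    have h4 := h.2.2 i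
    simp at h2 h3
    have hlt : ∑ j ∈ Finset.univ.filter (· ≤ i), b j < ∑ j ∈ Finset.univ.filter (· ≤ i), a j := by
      apply Finset.sum_lt_sum
      · intro j hj
        simp at hj
        rcases hj.lt_or_eq with h | h
        · exact (h2 j h).le
        · rw [h]; exact h3.le
      · exact ⟨i, by simp, h3⟩
    omega

lemma highest_spec (n : ℕ) (g : MvPolynomial (Fin n) ℂ) (u : Fin n → ℕ)
    (h : HighestPartition n g u) :
    g.IsSymmetric ∧ g ≠ 0 ∧ MonomialOrder.lex.degree g = Finsupp.equivFunOnFinite.symm u := by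
  obtain ⟨S, c, hS, hc, hle, rfl⟩ := h
  have hcoef : (∑ ν ∈ S, c ν • msym n ν).coeff (Finsupp.equivFunOnFinite.symm u) = c u := by
    rw [coeff_sum, Finset.sum_eq_single u]
    · rw [coeff_smul, coeff_msym_self]; simp
    · intro ν hν hne
      rw [coeff_smul, MonomialOrder.coeff_eq_zero_of_lt (m := MonomialOrder.lex), smul_zero]
      rw [degree_msym n ν (hle ν hν).1]
      exact domLT_lex n ν u ((hle ν hν).2.resolve_left hne)
    · intro h; exact absurd hS h
  refine ⟨?_, ?_, ?_⟩
  · exact Submodule.sum_mem (MvPolynomial.symmetricSubalgebra (Fin n) ℂ).toSubmodule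
      fun ν _ => Submodule.smul_mem _ _ (msym_isSymmetric n ν)
  · intro h0
    rw [h0] at hcoef
    exact hc (by simpa using hcoef.symm)
  · apply MonomialOrder.lex.toSyn.injective
    apply le_antisymm
    · rw [MonomialOrder.degree_le_iff]
      intro d hd
      by_contra hlt
      push Not at hlt
      apply mem_support_iff.mp hd
      rw [coeff_sum]
      apply Finset.sum_eq_zero
      intro ν hν
      rw [coeff_smul, MonomialOrder.coeff_eq_zero_of_lt (m := MonomialOrder.lex), smul_zero]
      rw [degree_msym n ν (hle ν hν).1]
      refine lt_of_le_of_lt ?_ hlt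
      rcases (hle ν hν).2 with h | h
      · rw [h]
      · exact (domLT_lex n ν u h).le
    · apply MonomialOrder.le_degree
      rw [mem_support_iff, hcoef]
      exact hc

/-! ### Symmetric polynomials are spanned over the Frobenius image by the `g μ` -/

lemma degree_expand (m n : ℕ) (hm : m ≠ 0) (f : MvPolynomial (Fin n) ℂ) (hf : f ≠ 0) :
    MonomialOrder.lex.degree (expand m f) = m • MonomialOrder.lex.degree f := by
  classical
  apply MonomialOrder.lex.toSyn.injective
  apply le_antisymm
  · rw [MonomialOrder.degree_le_iff]
    intro d hd
    obtain ⟨e, he, rfl⟩ := Finset.mem_image.mp (support_expand_subset f hd)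
    rw [map_nsmul, map_nsmul]
    exact nsmul_le_nsmul_right (MonomialOrder.lex.le_degree he) m
  · apply MonomialOrder.le_degree
    rw [mem_support_iff, coeff_expand_smul m hm]
    exact MonomialOrder.coeff_degree_ne_zero_iff.mpr hf

noncomputable instance slimFintype (r n : ℕ) :
    Fintype {l : Fin n → ℕ // Antitone l ∧ IsSlim r n l} :=
  Fintype.ofInjective (slimMap r n) (slimMap_inj r n)

lemma card_slim_le (r n : ℕ) :
    Fintype.card {l : Fin n → ℕ // Antitone l ∧ IsSlim r n l} ≤
      Fintype.card (Fin n → Fin (r - 1)) :=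
  Fintype.card_le_of_injective (slimMap r n) (slimMap_inj r n)

lemma expand_isSymmetric (m n : ℕ) (f : MvPolynomial (Fin n) ℂ) (hf : f.IsSymmetric) :
    (expand m f).IsSymmetric := by
  intro e
  rw [rename_expand, hf e]

lemma spanning (r n : ℕ) (hr : 2 ≤ r)
    (g : {l : Fin n → ℕ // Antitone l ∧ IsSlim r n l} → MvPolynomial (Fin n) ℂ)
    (hg : ∀ μ, HighestPartition n (g μ) μ.1) (f : MvPolynomial (Fin n) ℂ)
    (hf : f.IsSymmetric) :
    ∃ h : {l : Fin n → ℕ // Antitone l ∧ IsSlim r n l} → MvPolynomial (Fin n) ℂ,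
      (∀ μ, (h μ).IsSymmetric) ∧ f = ∑ μ, expand (r - 1) (h μ) * g μ := by
  classical
  have key : ∀ s : MonomialOrder.lex.syn, ∀ f : MvPolynomial (Fin n) ℂ, f.IsSymmetric →
      MonomialOrder.lex.toSyn (MonomialOrder.lex.degree f) = s →
      ∃ h : {l : Fin n → ℕ // Antitone l ∧ IsSlim r n l} → MvPolynomial (Fin n) ℂ,
        (∀ μ, (h μ).IsSymmetric) ∧ f = ∑ μ, expand (r - 1) (h μ) * g μ := by
    intro s
    induction s using WellFoundedLT.induction with
    | ind s ih =>
    intro f hf hs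
    by_cases h0 : f = 0
    · refine ⟨fun _ => 0, fun _ => (symmetricSubalgebra (Fin n) ℂ).zero_mem, ?_⟩
      simp [h0]
    obtain ⟨l, u, hl, hu, hslim, hlu⟩ := slim_decomp r n hr _ (degree_antitone n f hf h0)
    set μ : {l : Fin n → ℕ // Antitone l ∧ IsSlim r n l} := ⟨u, hu, hslim⟩ with hμ
    obtain ⟨hgs, hg0, hgd⟩ := highest_spec n (g μ) μ.1 (hg μ)
    have hm : r - 1 ≠ 0 := by omega
    have hms0 : msym n l ≠ 0 := by
      intro h
      have := coeff_msym_self n l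
      rw [h] at this
      simp at this
    have hE0 : expand (r - 1) (msym n l) ≠ 0 := (expand_ne_zero (by omega)).mpr hms0
    set P := expand (r - 1) (msym n l) * g μ with hP
    have hP0 : P ≠ 0 := mul_ne_zero hE0 hg0
    have hPd : MonomialOrder.lex.degree P = MonomialOrder.lex.degree f := by
      rw [hP, MonomialOrder.degree_mul hE0 hg0, degree_expand _ _ hm _ hms0, degree_msym n l hl,
        hgd]
      ext i
      simp [hlu i, hμ]
    have hPc : P.coeff (MonomialOrder.lex.degree f) ≠ 0 := by
      rw [← hPd]; exact MonomialOrder.coeff_degree_ne_zero_iff.mpr hP0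
    have hPs : P.IsSymmetric := (symmetricSubalgebra (Fin n) ℂ).mul_mem
      (expand_isSymmetric _ _ _ (msym_isSymmetric n l)) hgs
    set c : ℂ := f.coeff (MonomialOrder.lex.degree f) / P.coeff (MonomialOrder.lex.degree f)
      with hc
    set f' := f - c • P with hf'
    have hf's : f'.IsSymmetric := Submodule.sub_mem
      (MvPolynomial.symmetricSubalgebra (Fin n) ℂ).toSubmodule hf
      (Submodule.smul_mem _ _ hPs)
    obtain ⟨h, hh1, hh2⟩ : ∃ h : {l : Fin n → ℕ // Antitone l ∧ IsSlim r n l} →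
        MvPolynomial (Fin n) ℂ,
        (∀ μ, (h μ).IsSymmetric) ∧ f' = ∑ μ, expand (r - 1) (h μ) * g μ := by
      by_cases hf'0 : f' = 0
      · refine ⟨fun _ => 0, fun _ => (symmetricSubalgebra (Fin n) ℂ).zero_mem, ?_⟩
        simp [hf'0]
      refine ih _ ?_ f' hf's rfl
      rw [← hs]
      have hcz : f'.coeff (MonomialOrder.lex.degree f) = 0 := by
        rw [hf', coeff_sub, coeff_smul, hc, smul_eq_mul, div_mul_cancel₀ _ hPc, sub_self]
      refine lt_of_le_of_ne ?_ ?_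
      · rw [MonomialOrder.degree_le_iff]
        intro d hd
        by_contra hlt
        push Not at hlt
        apply mem_support_iff.mp hd
        rw [hf', coeff_sub, coeff_smul, MonomialOrder.coeff_eq_zero_of_lt hlt,
          MonomialOrder.coeff_eq_zero_of_lt (f := P) (by rw [hPd]; exact hlt)]
        simp
      · intro heq
        have heq' := MonomialOrder.lex.toSyn.injective heq
        rw [← heq'] at hcz
        exact hf'0 (MonomialOrder.coeff_degree_eq_zero_iff.mp hcz)
    refine ⟨h + Pi.single μ (c • msym n l), ?_, ?_⟩
    · intro ν
      refine (symmetricSubalgebra (Fin n) ℂ).add_mem (hh1 ν) ?_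
      by_cases hν : ν = μ
      · subst hν
        rw [Pi.single_eq_same]
        exact Submodule.smul_mem (symmetricSubalgebra (Fin n) ℂ).toSubmodule _
          (msym_isSymmetric n l)
      · rw [Pi.single_eq_of_ne hν]
        exact (symmetricSubalgebra (Fin n) ℂ).zero_mem
    · have : f = f' + c • P := by rw [hf']; ring
      rw [this, hh2]
      simp only [Pi.add_apply, map_add, add_mul, Finset.sum_add_distrib]
      congr 1
      rw [Finset.sum_eq_single μ]
      · rw [Pi.single_eq_same, map_smul, smul_mul_assoc]
      · intro ν _ hν
        rw [Pi.single_eq_of_ne hν]; simp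
      · intro h; exact absurd (Finset.mem_univ _) h
  exact key _ f hf rfl

/-! ### Nondegeneracy on fibres -/

/-- the symmetric polynomial `∏ i, ∏ ζ ∈ Z, (X i - ζ)` -/
noncomputable def sepPoly (n : ℕ) (Z : Finset ℂ) : MvPolynomial (Fin n) ℂ :=
  ∏ i, ∏ z ∈ Z, (X i - C z)

lemma sepPoly_sym (n : ℕ) (Z : Finset ℂ) : (sepPoly n Z).IsSymmetric := by
  intro e
  unfold sepPoly
  simp only [map_prod, map_sub, rename_X, rename_C]
  exact Equiv.prod_comp e (fun i => ∏ z ∈ Z, (X i - C z))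

lemma fibre_nondeg (r n : ℕ) (hr : 2 ≤ r) (q : ℂ) (hq : IsPrimitiveRoot q (r - 1))
    (g : {l : Fin n → ℕ // Antitone l ∧ IsSlim r n l} → MvPolynomial (Fin n) ℂ)
    (hg : ∀ μ, HighestPartition n (g μ) μ.1)
    (p : Fin n → ℂ) (hp0 : ∀ i, p i ≠ 0) (hpi : Function.Injective (fun i => p i ^ (r - 1)))
    (c : {l : Fin n → ℕ // Antitone l ∧ IsSlim r n l} → ℂ)
    (hc : ∀ s : Fin n → Fin (r - 1),
      ∑ μ, c μ * eval (fun i => q ^ (s i : ℕ) * p i) (g μ) = 0) : ∀ μ, c μ = 0 := by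
  classical
  set v : {l : Fin n → ℕ // Antitone l ∧ IsSlim r n l} → ((Fin n → Fin (r - 1)) → ℂ) :=
    fun μ s => eval (fun i => q ^ (s i : ℕ) * p i) (g μ) with hv
  have hqm : ∀ a : ℕ, ∀ x : ℂ, (q ^ a * x) ^ (r - 1) = x ^ (r - 1) := by
    intro a x
    rw [mul_pow, ← pow_mul, mul_comm a, pow_mul, hq.pow_eq_one, one_pow, one_mul]
  have hinj : ∀ (a b : Fin (r - 1)) (i j : Fin n), q ^ (a : ℕ) * p i = q ^ (b : ℕ) * p j →
      a = b ∧ i = j := by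
    intro a b i j h
    have h1 : i = j := by
      apply hpi
      have := congrArg (· ^ (r - 1)) h
      simpa only [hqm] using this
    subst h1
    exact ⟨Fin.ext (hq.pow_inj a.2 b.2 (mul_right_cancel₀ (hp0 i) h)), rfl⟩
  have hspan : ⊤ ≤ Submodule.span ℂ (Set.range v) := by
    rw [← (Pi.basisFun ℂ (Fin n → Fin (r - 1))).span_eq, Submodule.span_le]
    rintro _ ⟨s, rfl⟩
    set Z : Finset ℂ := (Finset.univ.image
      (fun x : Fin (r - 1) × Fin n => q ^ (x.1 : ℕ) * p x.2)) \
      (Finset.univ.image fun i => q ^ (s i : ℕ) * p i) with hZ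
    obtain ⟨h, -, hh⟩ := spanning r n hr g hg _ (sepPoly_sym n Z)
    have hev : ∀ s' : Fin n → Fin (r - 1),
        eval (fun i => q ^ (s' i : ℕ) * p i) (sepPoly n Z) =
          ∑ μ, eval (fun i => p i ^ (r - 1)) (h μ) * v μ s' := by
      intro s'
      rw [hh, map_sum]
      refine Finset.sum_congr rfl fun μ _ => ?_
      rw [map_mul, eval_expand]
      congr 3
      funext i
      exact hqm _ _
    have hne : eval (fun i => q ^ (s i : ℕ) * p i) (sepPoly n Z) ≠ 0 := by
      unfold sepPoly
      simp only [map_prod, map_sub, eval_X, eval_C]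
      rw [Finset.prod_ne_zero_iff]
      intro i _
      rw [Finset.prod_ne_zero_iff]
      intro z hz h0
      rw [hZ, Finset.mem_sdiff] at hz
      apply hz.2
      rw [Finset.mem_image]
      exact ⟨i, Finset.mem_univ _, by linear_combination h0⟩
    have hz : ∀ s', s' ≠ s → eval (fun i => q ^ (s' i : ℕ) * p i) (sepPoly n Z) = 0 := by
      intro s' hs'
      obtain ⟨i, hi⟩ := Function.ne_iff.mp hs'
      unfold sepPoly
      simp only [map_prod, map_sub, eval_X, eval_C]
      apply Finset.prod_eq_zero (Finset.mem_univ i)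
      apply Finset.prod_eq_zero (i := q ^ (s' i : ℕ) * p i)
      · rw [hZ, Finset.mem_sdiff]
        refine ⟨Finset.mem_image.mpr ⟨(s' i, i), Finset.mem_univ _, rfl⟩, ?_⟩
        intro hm
        obtain ⟨j, -, hj⟩ := Finset.mem_image.mp hm
        obtain ⟨h1, rfl⟩ := hinj _ _ _ _ hj
        exact hi h1.symm
      · ring
    have hE : (Pi.basisFun ℂ (Fin n → Fin (r - 1))) s =
        ∑ μ, ((eval (fun i => q ^ (s i : ℕ) * p i) (sepPoly n Z))⁻¹ *
          eval (fun i => p i ^ (r - 1)) (h μ)) • v μ := by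
      funext s'
      simp only [Finset.sum_apply, Pi.smul_apply, smul_eq_mul, mul_assoc]
      rw [← Finset.mul_sum, ← hev]
      by_cases hs' : s' = s
      · subst hs'
        rw [inv_mul_cancel₀ hne]; simp
      · rw [hz s' hs']
        simp [hs']
    rw [hE]
    exact Submodule.sum_mem _ fun μ _ => Submodule.smul_mem _ _
      (Submodule.subset_span ⟨μ, rfl⟩)
  have hli : LinearIndependent ℂ v := by
    apply linearIndependent_of_top_le_span_of_card_le_finrank hspan
    rw [Module.finrank_fintype_fun_eq_card]
    exact card_slim_le r n
  rw [Fintype.linearIndependent_iff] at hli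
  apply hli
  funext s
  simpa [Finset.sum_apply] using hc s

/-! ### Density -/

lemma density (n : ℕ) (L : Fin n → MvPolynomial (Fin n) ℂ) (h : MvPolynomial (Fin n) ℂ)
    (w : Fin n → ℂ) (hw0 : ∀ i, eval w (L i) ≠ 0)
    (hwi : Function.Injective fun i => eval w (L i))
    (hh : ∀ v : Fin n → ℂ, (∀ i, eval v (L i) ≠ 0) →
      (Function.Injective fun i => eval v (L i)) → eval (fun i => eval v (L i)) h = 0)
    (v : Fin n → ℂ) : eval (fun i => eval v (L i)) h = 0 := by
  classical
  set H : MvPolynomial (Fin n) ℂ := aeval L h with hH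
  have hHe : ∀ v, eval v H = eval (fun i => eval v (L i)) h := by
    intro v
    rw [hH, aeval_def, eval_eval₂]
    simp only [eval]
    congr 1
    ext; simp
  set D : MvPolynomial (Fin n) ℂ := (∏ i, L i) *
    ∏ x ∈ Finset.univ.filter (fun x : Fin n × Fin n => x.1 ≠ x.2), (L x.1 - L x.2) with hD
  have hDe : ∀ v, eval v D ≠ 0 ↔ (∀ i, eval v (L i) ≠ 0) ∧
      (Function.Injective fun i => eval v (L i)) := by
    intro v
    rw [hD, map_mul, mul_ne_zero_iff, map_prod, map_prod, Finset.prod_ne_zero_iff,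
      Finset.prod_ne_zero_iff]
    simp only [Finset.mem_univ, true_imp_iff, Finset.mem_filter, true_and, map_sub, sub_ne_zero,
      Prod.forall]
    refine and_congr_right fun _ => ⟨fun h a b hab => ?_, fun h a b hne hab => hne (h hab)⟩
    by_contra hne
    exact h a b hne hab
  have hHD : H * D = 0 := by
    apply MvPolynomial.funext
    intro v
    rw [map_mul, map_zero]
    by_cases hd : eval v D = 0
    · rw [hd, mul_zero]
    · rw [hHe, hh v ((hDe v).mp hd).1 ((hDe v).mp hd).2, zero_mul]
  have hD0 : D ≠ 0 := by
    intro h0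
    have := (hDe w).mpr ⟨hw0, hwi⟩
    rw [h0] at this
    simp at this
  rw [← hHe, (mul_eq_zero.mp hHD).resolve_right hD0, map_zero]

/-! ### The two directions -/

lemma eval_perm (n : ℕ) (f : MvPolynomial (Fin n) ℂ) (hf : f.IsSymmetric)
    (e : Equiv.Perm (Fin n)) (v : Fin n → ℂ) : eval (v ∘ e) f = eval v f := by
  rw [← eval_rename, hf e]

lemma eval_pow_root (k m n : ℕ) (hcop : Nat.Coprime (k + 1) m) (hn : k < n) (t : ℂ)
    (ht : IsPrimitiveRoot t (k + 1)) (f : MvPolynomial (Fin n) ℂ) (hf : f.IsSymmetric)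
    (x : ℂ) (y : Fin n → ℂ) :
    eval (fun j : Fin n => if (j : ℕ) ≤ k then t ^ (m * (j : ℕ)) * x else y j) f =
      eval (fun j : Fin n => if (j : ℕ) ≤ k then t ^ (j : ℕ) * x else y j) f := by
  have hlt : ∀ a : ℕ, m * a % (k + 1) < k + 1 := fun a => Nat.mod_lt _ (by omega)
  let φ : Fin n → Fin n := fun j => if (j : ℕ) ≤ k then
    ⟨m * (j : ℕ) % (k + 1), by have := hlt (j : ℕ); omega⟩ else j
  have hφ1 : ∀ j : Fin n, (j : ℕ) ≤ k → (φ j : ℕ) = m * (j : ℕ) % (k + 1) := by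
    intro j hj; simp [φ, hj]
  have hφ2 : ∀ j : Fin n, ¬ (j : ℕ) ≤ k → φ j = j := by
    intro j hj; simp [φ, hj]
  have hinj : Function.Injective φ := by
    intro a b hab
    by_cases ha : (a : ℕ) ≤ k <;> by_cases hb : (b : ℕ) ≤ k
    · have h1 : m * (a : ℕ) ≡ m * (b : ℕ) [MOD (k + 1)] := by
        have := congrArg Fin.val hab
        rw [hφ1 a ha, hφ1 b hb] at this
        exact this
      have h2 := Nat.ModEq.cancel_left_of_coprime hcop h1
      exact Fin.ext (Nat.ModEq.eq_of_lt_of_lt h2 (by omega) (by omega))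
    · have := congrArg Fin.val hab
      rw [hφ1 a ha, hφ2 b hb] at this
      have := hlt (a : ℕ)
      omega
    · have := congrArg Fin.val hab
      rw [hφ1 b hb, hφ2 a ha] at this
      have := hlt (b : ℕ)
      omega
    · rwa [hφ2 a ha, hφ2 b hb] at hab
  let e : Equiv.Perm (Fin n) := Equiv.ofBijective φ (Finite.injective_iff_bijective.mp hinj)
  rw [← eval_perm n f hf e (fun j : Fin n => if (j : ℕ) ≤ k then t ^ (j : ℕ) * x else y j)]
  congr 2
  funext j
  simp only [Function.comp_apply]
  have he : e j = φ j := rfl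
  rw [he]
  by_cases hj : (j : ℕ) ≤ k
  · have h1 : (φ j : ℕ) ≤ k := by
      rw [hφ1 j hj]; have := hlt (j : ℕ); omega
    rw [if_pos hj, if_pos h1, hφ1 j hj]
    congr 1
    exact (pow_mod_orderOf t (m * (j : ℕ))).symm.trans (by rw [← ht.eq_orderOf])
  · rw [hφ2 j hj, if_neg hj, if_neg hj]

lemma mem_of_factor (k r n : ℕ) (hcop : Nat.Coprime (k + 1) (r - 1))
    (t q : ℂ) (ht : IsPrimitiveRoot t (k + 1)) (hq : IsPrimitiveRoot q (r - 1))
    (hn : k < n) (h : MvPolynomial (Fin n) ℂ) (hs : h.IsSymmetric)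
    (hv : ∀ (x : ℂ) (y : Fin n → ℂ),
      eval (fun j : Fin n => if (j : ℕ) ≤ k then t ^ (j : ℕ) * x else y j) h = 0)
    (s : ℕ → ℕ) (x : ℂ) (y : Fin n → ℂ) :
    eval (fun j : Fin n => if (j : ℕ) = 0 then x
      else if (j : ℕ) ≤ k then t ^ (j : ℕ) * q ^ (s (j : ℕ)) * x else y j)
      (expand (r - 1) h) = 0 := by
  rw [eval_expand]
  have := eval_pow_root k (r - 1) n hcop hn t ht h hs (x ^ (r - 1)) (fun j => y j ^ (r - 1))
  rw [hv] at this
  rw [← this]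
  congr 2
  funext j
  simp only [Pi.pow_apply]
  by_cases h0 : (j : ℕ) = 0
  · simp [h0]
  · rw [if_neg h0]
    split_ifs with h1
    · rw [mul_pow, mul_pow, ← pow_mul, ← pow_mul, mul_comm (s (j : ℕ)), pow_mul q,
        hq.pow_eq_one, one_pow, mul_one, mul_comm (j : ℕ)]
    · rfl

lemma factor_of_mem (k r n : ℕ) (hr : 2 ≤ r) (hcop : Nat.Coprime (k + 1) (r - 1))
    (t q : ℂ) (ht : IsPrimitiveRoot t (k + 1)) (hq : IsPrimitiveRoot q (r - 1))
    (hn : k < n)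
    (g : {l : Fin n → ℕ // Antitone l ∧ IsSlim r n l} → MvPolynomial (Fin n) ℂ)
    (hg : ∀ μ, HighestPartition n (g μ) μ.1)
    (h : {l : Fin n → ℕ // Antitone l ∧ IsSlim r n l} → MvPolynomial (Fin n) ℂ)
    (hs : ∀ μ, (h μ).IsSymmetric)
    (hv : ∀ (s : ℕ → ℕ), (∀ i, s i ≤ r - 2) → ∀ (x : ℂ) (y : Fin n → ℂ),
          eval
            (fun j : Fin n => if (j : ℕ) = 0 then x
              else if (j : ℕ) ≤ k then t ^ (j : ℕ) * q ^ (s (j : ℕ)) * x else y j)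
            (∑ μ, expand (r - 1) (h μ) * g μ) = 0)
    (μ : {l : Fin n → ℕ // Antitone l ∧ IsSlim r n l}) (x : ℂ) (y : Fin n → ℂ) :
    eval (fun j : Fin n => if (j : ℕ) ≤ k then t ^ (j : ℕ) * x else y j) (h μ) = 0 := by
  have hm : 0 < r - 1 := by omega
  have hn0 : 0 < n := by omega
  rw [← eval_pow_root k (r - 1) n hcop hn t ht (h μ) (hs μ) x y]
  set L : Fin n → MvPolynomial (Fin n) ℂ := fun j =>
    if (j : ℕ) ≤ k then C (t ^ ((r - 1) * (j : ℕ))) * X ⟨0, hn0⟩ else X j with hL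
  have hLe : ∀ (v : Fin n → ℂ) (j : Fin n), eval v (L j) =
      if (j : ℕ) ≤ k then t ^ ((r - 1) * (j : ℕ)) * v ⟨0, hn0⟩ else v j := by
    intro v j
    simp only [hL]
    split_ifs <;> simp
  have ht0 : t ≠ 0 := ht.ne_zero (by omega)
  have htm : IsPrimitiveRoot (t ^ (r - 1)) (k + 1) := ht.pow_of_coprime _ hcop.symm
  have hD := density n L (h μ) (fun j => ((j : ℕ) : ℂ) + 1) ?_ ?_ ?_
    (fun j => if (j : ℕ) = 0 then x else y j)
  · rw [← hD]
    congr 2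
    funext j
    rw [hLe]
    by_cases hj : (j : ℕ) ≤ k
    · simp [hj]
    · have : (j : ℕ) ≠ 0 := by omega
      simp [hj, this]
  · intro i
    rw [hLe]
    split_ifs
    · simp [ht0]
    · exact Nat.cast_add_one_ne_zero _
  · have hnorm : ∀ j : ℕ, ‖(t ^ (r - 1)) ^ j‖ = 1 := by
      intro j
      rw [norm_pow, htm.norm'_eq_one (by omega), one_pow]
    have hnn : ∀ j : ℕ, ‖((j : ℕ) : ℂ) + 1‖ = (j : ℝ) + 1 := by
      intro j
      have := Complex.norm_natCast (j + 1)
      push_cast at this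
      exact this
    intro a b hab
    simp only [hLe] at hab
    by_cases ha : (a : ℕ) ≤ k <;> by_cases hb : (b : ℕ) ≤ k
    · simp only [ha, hb, if_true, Nat.cast_zero, zero_add, mul_one, pow_mul] at hab
      exact Fin.ext (htm.pow_inj (by omega) (by omega) hab)
    · simp only [ha, hb, if_true, if_false, Nat.cast_zero, zero_add, mul_one, pow_mul] at hab
      have := congrArg norm hab
      rw [hnorm, hnn] at this
      have h2 : (b : ℝ) = 0 := by linarith
      have h3 : (b : ℕ) = 0 := by exact_mod_cast h2
      omega
    · simp only [ha, hb, if_true, if_false, Nat.cast_zero, zero_add, mul_one, pow_mul] at hab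
      have := congrArg norm hab
      rw [hnorm, hnn] at this
      have h2 : (a : ℝ) = 0 := by linarith
      have h3 : (a : ℕ) = 0 := by exact_mod_cast h2
      omega
    · simp only [ha, hb, if_false] at hab
      have h2 : ((a : ℕ) : ℂ) = (b : ℕ) := by linear_combination hab
      exact Fin.ext (by exact_mod_cast h2)
  · intro v hv0 hvi
    choose ρ hρ using fun z : ℂ => IsAlgClosed.exists_pow_nat_eq z hm
    set p : Fin n → ℂ := fun j => if (j : ℕ) ≤ k then t ^ (j : ℕ) * ρ (v ⟨0, hn0⟩) else ρ (v j)
      with hp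
    have hpm : ∀ j, p j ^ (r - 1) = eval v (L j) := by
      intro j
      rw [hLe, hp]
      simp only
      split_ifs
      · rw [mul_pow, hρ, ← pow_mul, mul_comm (j : ℕ)]
      · rw [hρ]
    have hq1 := hq.pow_eq_one
    refine fibre_nondeg r n hr q hq g hg p ?_ ?_ (fun μ => eval (fun i => eval v (L i)) (h μ))
      ?_ μ
    · intro i h0
      apply hv0 i
      rw [← hpm, h0, zero_pow (by omega)]
    · simpa only [hpm] using hvi
    · intro s
      set s0 : ℕ := (s ⟨0, hn0⟩ : ℕ) with hs0
      have hs0lt : s0 < r - 1 := (s ⟨0, hn0⟩).2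
      set s' : ℕ → ℕ := fun i => if hi : i < n then
        ((s ⟨i, hi⟩ : ℕ) + (r - 1 - s0)) % (r - 1) else 0 with hs'
      have key := hv s' ?_ (q ^ s0 * ρ (v ⟨0, hn0⟩)) (fun j => q ^ (s j : ℕ) * ρ (v j))
      · have hpt : (fun j : Fin n => if (j : ℕ) = 0 then q ^ s0 * ρ (v ⟨0, hn0⟩)
              else if (j : ℕ) ≤ k then t ^ (j : ℕ) * q ^ (s' (j : ℕ)) * (q ^ s0 * ρ (v ⟨0, hn0⟩))
                else q ^ (s j : ℕ) * ρ (v j)) = fun i => q ^ (s i : ℕ) * p i := by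
          funext j
          by_cases h0 : (j : ℕ) = 0
          · have : j = ⟨0, hn0⟩ := Fin.ext h0
            subst this
            simp [hp, hs0]
          · rw [if_neg h0, hp]
            simp only
            split_ifs with h1
            · have : q ^ (s' (j : ℕ)) * q ^ s0 = q ^ (s j : ℕ) := by
                have e1 : s' (j : ℕ) = ((s j : ℕ) + (r - 1 - s0)) % (r - 1) := by
                  simp [hs']
                have e2 : q ^ (s' (j : ℕ)) = q ^ ((s j : ℕ) + (r - 1 - s0)) := by
                  rw [e1]
                  exact (pow_eq_pow_mod _ hq1).symm
                rw [e2, ← pow_add]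
                have : (s j : ℕ) + (r - 1 - s0) + s0 = (s j : ℕ) + (r - 1) := by omega
                rw [this, pow_add, hq1, mul_one]
              rw [← this]; ring
            · rfl
        rw [hpt, map_sum] at key
        rw [← key]
        refine Finset.sum_congr rfl fun ν _ => ?_
        rw [map_mul, eval_expand]
        congr 3
        funext i
        rw [Pi.pow_apply, mul_pow, hpm, ← pow_mul, mul_comm (s i : ℕ), pow_mul, hq1, one_pow,
          one_mul]
      · intro i
        simp only [hs']
        split_ifs
        · have := Nat.mod_lt ((s ⟨i, by assumption⟩ : ℕ) + (r - 1 - s0)) hm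
          omega
        · omega

lemma sum_inj (r n : ℕ) (hr : 2 ≤ r) (q : ℂ) (hq : IsPrimitiveRoot q (r - 1))
    (g : {l : Fin n → ℕ // Antitone l ∧ IsSlim r n l} → MvPolynomial (Fin n) ℂ)
    (hg : ∀ μ, HighestPartition n (g μ) μ.1)
    (h : {l : Fin n → ℕ // Antitone l ∧ IsSlim r n l} → MvPolynomial (Fin n) ℂ)
    (h0 : ∑ μ, expand (r - 1) (h μ) * g μ = 0) (μ) : h μ = 0 := by
  have hm : 0 < r - 1 := by omega
  apply MvPolynomial.funext
  intro v
  rw [map_zero]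
  have hD := density n X (h μ) (fun j => ((j : ℕ) : ℂ) + 1) ?_ ?_ ?_ v
  · simpa using hD
  · intro i
    simpa using Nat.cast_add_one_ne_zero (R := ℂ) (i : ℕ)
  · intro a b hab
    simp only [eval_X] at hab
    have h2 : ((a : ℕ) : ℂ) = (b : ℕ) := by linear_combination hab
    exact Fin.ext (by exact_mod_cast h2)
  · intro v hv0 hvi
    simp only [eval_X] at hv0 hvi ⊢
    choose ρ hρ using fun z : ℂ => IsAlgClosed.exists_pow_nat_eq z hm
    refine fibre_nondeg r n hr q hq g hg (fun i => ρ (v i)) ?_ ?_ (fun μ => eval v (h μ))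
      ?_ μ
    · intro i h0
      apply hv0 i
      rw [← hρ (v i), h0, zero_pow (by omega)]
    · simpa only [hρ] using hvi
    · intro s
      have key := congrArg (eval fun i => q ^ (s i : ℕ) * ρ (v i)) h0
      rw [map_sum, map_zero] at key
      rw [← key]
      refine Finset.sum_congr rfl fun ν _ => ?_
      rw [map_mul, eval_expand]
      congr 3
      funext i
      rw [Pi.pow_apply, mul_pow, hρ, ← pow_mul, mul_comm (s i : ℕ), pow_mul, hq.pow_eq_one,
        one_pow, one_mul]

/-- the linear map `h ↦ 𝓕(h) g` -/
noncomputable def frobMul (r n : ℕ) (g : MvPolynomial (Fin n) ℂ) :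
    MvPolynomial (Fin n) ℂ →ₗ[ℂ] MvPolynomial (Fin n) ℂ :=
  (LinearMap.mulRight ℂ g).comp (expand (r - 1)).toLinearMap

lemma frobMul_apply (r n : ℕ) (g h : MvPolynomial (Fin n) ℂ) :
    frobMul r n g h = expand (r - 1) h * g := rfl

lemma Frob_eq (r n : ℕ) (h : MvPolynomial (Fin n) ℂ) : Frob r n h = expand (r - 1) h := rfl

/-- Theorem 4.8 / "basis thm": choose for each `(r-1)`-slim `μ ∈ π_n` a
symmetric polynomial `g_μ` with highest partition `μ`, and let `{f̃_λ}`, `λ` ranging over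
the admissible partitions in `π_n`, be any `ℂ`-basis of `F_n^{(k,2)}`; set
`f_λ = 𝓕(f̃_λ)`.  Then the products `{f_λ g_μ}` form a `ℂ`-basis of `F_n^{(k,r)}`. -/
theorem basis_of_Fkr
    (k r n : ℕ) (hk : 0 < k) (hr : 2 ≤ r) (hcop : Nat.Coprime (k + 1) (r - 1))
    (t q : ℂ) (ht : IsPrimitiveRoot t (k + 1)) (hq : IsPrimitiveRoot q (r - 1))
    (hn : k < n)
    (g : {l : Fin n → ℕ // Antitone l ∧ IsSlim r n l} → MvPolynomial (Fin n) ℂ)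
    (hg : ∀ μ, HighestPartition n (g μ) μ.1)
    (ftil : {l : Fin n → ℕ // Antitone l ∧
        ∀ i : ℕ, (Finset.univ.filter fun a : Fin n => l a = i).card ≤ k}
      → MvPolynomial (Fin n) ℂ)
    (hftil_indep : LinearIndependent ℂ ftil)
    (hftil_span : Submodule.span ℂ (Set.range ftil) =
      Submodule.span ℂ {f : MvPolynomial (Fin n) ℂ |
        f.IsSymmetric ∧
        ∀ (x : ℂ) (y : Fin n → ℂ),
          MvPolynomial.eval
            (fun j : Fin n => if (j : ℕ) ≤ k then t ^ (j : ℕ) * x else y j) f = 0}) :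
    LinearIndependent ℂ
      (fun p : {l : Fin n → ℕ // Antitone l ∧
            ∀ i : ℕ, (Finset.univ.filter fun a : Fin n => l a = i).card ≤ k} ×
          {l : Fin n → ℕ // Antitone l ∧ IsSlim r n l} =>
        Frob r n (ftil p.1) * g p.2) ∧
    Submodule.span ℂ
      (Set.range fun p : {l : Fin n → ℕ // Antitone l ∧
            ∀ i : ℕ, (Finset.univ.filter fun a : Fin n => l a = i).card ≤ k} ×
          {l : Fin n → ℕ // Antitone l ∧ IsSlim r n l} =>
        Frob r n (ftil p.1) * g p.2) =
      Submodule.span ℂ {f : MvPolynomial (Fin n) ℂ |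
        f.IsSymmetric ∧
        ∀ (s : ℕ → ℕ), (∀ i, s i ≤ r - 2) → ∀ (x : ℂ) (y : Fin n → ℂ),
          MvPolynomial.eval
            (fun j : Fin n => if (j : ℕ) = 0 then x
              else if (j : ℕ) ≤ k then t ^ (j : ℕ) * q ^ (s (j : ℕ)) * x else y j)
            f = 0} := by
  classical
  constructor
  · let Φ : ({l : Fin n → ℕ // Antitone l ∧ IsSlim r n l} → MvPolynomial (Fin n) ℂ) →ₗ[ℂ]
        MvPolynomial (Fin n) ℂ := ∑ μ, (frobMul r n (g μ)).comp (LinearMap.proj μ)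
    have hΦ : ∀ h, Φ h = ∑ μ, expand (r - 1) (h μ) * g μ := by
      intro h
      simp [Φ, frobMul_apply]
    have hker : LinearMap.ker Φ = ⊥ := by
      rw [LinearMap.ker_eq_bot']
      intro h h0
      rw [hΦ] at h0
      funext μ
      exact sum_inj r n hr q hq g hg h h0 μ
    have h1 := Pi.linearIndependent_single
      (fun (_ : {l : Fin n → ℕ // Antitone l ∧ IsSlim r n l}) => ftil)
      (fun _ => hftil_indep)
    have h2 := h1.map' Φ hker
    let e : ({l : Fin n → ℕ // Antitone l ∧
            ∀ i : ℕ, (Finset.univ.filter fun a : Fin n => l a = i).card ≤ k} ×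
          {l : Fin n → ℕ // Antitone l ∧ IsSlim r n l}) →
        (Σ _ : {l : Fin n → ℕ // Antitone l ∧ IsSlim r n l}, {l : Fin n → ℕ // Antitone l ∧
            ∀ i : ℕ, (Finset.univ.filter fun a : Fin n => l a = i).card ≤ k}) :=
      fun p => ⟨p.2, p.1⟩
    have he : Function.Injective e := by
      rintro ⟨a, b⟩ ⟨c, d⟩ h
      simp only [e, Sigma.mk.injEq, heq_eq_eq] at h
      rw [h.1, h.2]
    have h3 := h2.comp e he
    convert! h3 using 1
    funext p
    simp only [Function.comp_apply, e, hΦ, Frob_eq]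
    rw [Finset.sum_eq_single p.2]
    · rw [Pi.single_eq_same]
    · intro ν _ hν
      rw [Pi.single_eq_of_ne hν]; simp
    · intro h; exact absurd (Finset.mem_univ _) h
  · apply le_antisymm
    · rw [Submodule.span_le]
      rintro _ ⟨⟨l, μ⟩, rfl⟩
      have h1 : ftil l ∈ Submodule.span ℂ (Set.range ftil) := Submodule.subset_span ⟨l, rfl⟩
      rw [hftil_span] at h1
      have h2 := Submodule.mem_map_of_mem (f := frobMul r n (g μ)) h1
      rw [Submodule.map_span] at h2
      refine Submodule.span_mono ?_ h2
      rintro _ ⟨h, ⟨hs, hv⟩, rfl⟩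
      rw [frobMul_apply]
      refine ⟨(symmetricSubalgebra (Fin n) ℂ).mul_mem (expand_isSymmetric _ _ _ hs)
        (highest_spec n _ _ (hg μ)).1, ?_⟩
      intro s _ x y
      rw [map_mul, mem_of_factor k r n hcop t q ht hq hn h hs hv s x y, zero_mul]
    · rw [Submodule.span_le]
      rintro f ⟨hfs, hfv⟩
      obtain ⟨h, hs, rfl⟩ := spanning r n hr g hg f hfs
      refine Submodule.sum_mem _ fun μ _ => ?_
      have h1 : h μ ∈ Submodule.span ℂ (Set.range ftil) := by
        rw [hftil_span]
        exact Submodule.subset_span ⟨hs μ,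
          factor_of_mem k r n hr hcop t q ht hq hn g hg h hs hfv μ⟩
      have h2 := Submodule.mem_map_of_mem (f := frobMul r n (g μ)) h1
      rw [Submodule.map_span] at h2
      refine Submodule.span_mono ?_ h2
      rintro _ ⟨_, ⟨l, rfl⟩, rfl⟩
      exact ⟨(l, μ), rfl⟩
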